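/- Let v : ℝⁿ → ℝⁿ be a C¹, ℤⁿ-periodic vector field with div v = 0 everywhere, let Pe be a real constant, and let φ, φ† : ℝⁿ → ℝ be C², ℤⁿ-periodic functions that are strictly positive everywhere. Suppose there are real numbers λ and λ† such that div(Pe v φ − ∇φ) = λ φ and −Pe v·∇φ† − Δφ† = λ† φ† hold at every point of ℝⁿ. Then λ = λ†: the eigenvalue of the direct advection–diffusion eigenproblem equals the eigenvalue of the adjoint eigenproblem associated with positive periodic eigenfunctions. -/

import Mathlib

/-- Gradient of a scalar field on `ℝⁿ` (components w.r.t. the standard basis). -/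
noncomputable def vgrad {n : ℕ} (f : (Fin n → ℝ) → ℝ) (x : Fin n → ℝ) : Fin n → ℝ :=
  fun i => fderiv ℝ f x (Pi.single i 1)

/-- Divergence of a vector field on `ℝⁿ`: `∑ i, ∂ᵢ Fᵢ`. -/
noncomputable def vdiv {n : ℕ} (F : (Fin n → ℝ) → (Fin n → ℝ)) (x : Fin n → ℝ) : ℝ :=
  ∑ i, fderiv ℝ (fun y => F y i) x (Pi.single i 1)

/-!
Lagrange's identity: `g L f - f L† g` is the divergence of the bilinear concomitant `g J + f ∇g`,
where `J = Pe v f - ∇f` is the flux of `f`; the two terms `∇f ⬝ ∇g` cancel. The concomitant is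
periodic, so in the divergence theorem on a period cell opposite faces cancel, and
`∫ g L f = ∫ f L† g`. For eigenfunctions this reads `λ ∫ f g = λ† ∫ f g`, and `∫ f g ≠ 0` when
both are positive.
-/

open MeasureTheory Set

variable {n : ℕ}

section VectorCalculus

variable {f : (Fin n → ℝ) → ℝ} {F G : (Fin n → ℝ) → (Fin n → ℝ)} {x : Fin n → ℝ}

lemma contDiff_vgrad {k m : WithTop ℕ∞} (hf : ContDiff ℝ m f) (hkm : k + 1 ≤ m) :
    ContDiff ℝ k (vgrad f) :=
  contDiff_pi.2 fun _ => (hf.fderiv_right hkm).clm_apply contDiff_const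

lemma continuous_vdiv (hF : ContDiff ℝ 1 F) : Continuous (vdiv F) :=
  continuous_finsetSum _ fun i _ =>
    ((contDiff_pi.1 hF i).continuous_fderiv one_ne_zero).clm_apply continuous_const

lemma vdiv_add (hF : DifferentiableAt ℝ F x) (hG : DifferentiableAt ℝ G x) :
    vdiv (fun y => F y + G y) x = vdiv F x + vdiv G x := by
  simp only [vdiv, ← Finset.sum_add_distrib, Pi.add_apply]
  refine Finset.sum_congr rfl fun i _ => ?_
  rw [fderiv_fun_add (differentiableAt_pi.1 hF i) (differentiableAt_pi.1 hG i), add_apply]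

lemma vdiv_smul (hf : DifferentiableAt ℝ f x) (hF : DifferentiableAt ℝ F x) :
    vdiv (fun y => f y • F y) x = f x * vdiv F x + vgrad f x ⬝ᵥ F x := by
  simp only [vdiv, vgrad, dotProduct, Finset.mul_sum, ← Finset.sum_add_distrib, Pi.smul_apply,
    smul_eq_mul]
  refine Finset.sum_congr rfl fun i _ => ?_
  rw [fderiv_fun_mul hf (differentiableAt_pi.1 hF i)]
  simp only [add_apply, smul_apply, smul_eq_mul, mul_comm (F x i)]

end VectorCalculus

section Periodicity

variable {α : Type*} {ℓ : Fin n → ℝ}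

/-- Periodicity with respect to the lattice of boxes with side lengths `ℓ`, expressed on the
generators `ℓ i eᵢ`; the choice `ℓ = 1` is `ℤⁿ`-periodicity. -/
def IsCellPeriodic (ℓ : Fin n → ℝ) (f : (Fin n → ℝ) → α) : Prop :=
  ∀ i, Function.Periodic f (Pi.single i (ℓ i))

lemma isCellPeriodic_one_of_forall_int {f : (Fin n → ℝ) → α}
    (hf : ∀ (x : Fin n → ℝ) (z : Fin n → ℤ), f (x + fun i => (z i : ℝ)) = f x) :
    IsCellPeriodic 1 f := fun i x => by
  have hcast : (fun j => ((Pi.single i 1 : Fin n → ℤ) j : ℝ)) = Pi.single i 1 := by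
    ext j
    simp [Pi.single_apply]
  simpa only [hcast, Pi.one_apply] using hf x (Pi.single i 1)

lemma isCellPeriodic_vgrad {f : (Fin n → ℝ) → ℝ} (hf : IsCellPeriodic ℓ f) :
    IsCellPeriodic ℓ (vgrad f) := fun i x => by
  unfold vgrad
  rw [← fderiv_comp_add_right, (hf i).funext]

lemma insertNth_add_eq_add_single [AddZeroClass α] (i : Fin (n + 1)) (s t : α) (x : Fin n → α) :
    (i.insertNth (s + t) x : Fin (n + 1) → α) =
      (i.insertNth s x : Fin (n + 1) → α) + Pi.single i t := by
  ext j
  refine i.succAboveCases ?_ (fun k => ?_) j <;> simp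

theorem integral_vdiv_eq_zero {F : (Fin n → ℝ) → (Fin n → ℝ)} (hF : ContDiff ℝ 1 F)
    (hper : IsCellPeriodic ℓ F) (a : Fin n → ℝ) :
    ∫ x in Icc a (a + ℓ), vdiv F x = 0 := by
  by_cases hle : a ≤ a + ℓ
  swap
  · rw [Icc_eq_empty hle, setIntegral_empty]
  obtain _ | n := n
  · simp [vdiv]
  have hdivergence := integral_divergence_of_hasFDerivAt_off_countable' a (a + ℓ) hle
    (fun i x => F x i) (fun i x => fderiv ℝ (fun y => F y i) x) ∅ countable_empty
    (fun i => (contDiff_pi.1 hF i).continuous.continuousOn)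
    (fun x _ i => ((contDiff_pi.1 hF i).differentiable one_ne_zero x).hasFDerivAt)
    ((continuous_vdiv hF).continuousOn.integrableOn_compact isCompact_Icc)
  have hfaces (i : Fin (n + 1)) (x : Fin n → ℝ) :
      F (i.insertNth ((a + ℓ) i) x) i = F (i.insertNth (a i) x) i := by
    rw [Pi.add_apply, insertNth_add_eq_add_single, hper i]
  refine hdivergence.trans (Finset.sum_eq_zero fun i _ => sub_eq_zero.2 ?_)
  simp only [hfaces]

end Periodicity

lemma setIntegral_pos_of_forall_mem_pos {X : Type*} [MeasurableSpace X] {μ : Measure X}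
    {s : Set X} {f : X → ℝ} (hs : MeasurableSet s) (hμs : μ s ≠ 0) (hfi : IntegrableOn f s μ)
    (hf : ∀ x ∈ s, 0 < f x) : 0 < ∫ x in s, f x ∂μ := by
  have hsupp : Function.support f ∩ s = s := inter_eq_right.2 fun x hx => (hf x hx).ne'
  rwa [setIntegral_pos_iff_support_of_nonneg_ae
    (ae_restrict_of_forall_mem hs fun x hx => (hf x hx).le) hfi, hsupp, pos_iff_ne_zero]

lemma setIntegral_Icc_pos {a b : Fin n → ℝ} {f : (Fin n → ℝ) → ℝ} (hab : ∀ i, a i < b i)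
    (hf : ContinuousOn f (Icc a b)) (hpos : ∀ x ∈ Icc a b, 0 < f x) :
    0 < ∫ x in Icc a b, f x := by
  refine setIntegral_pos_of_forall_mem_pos measurableSet_Icc ?_ hf.integrableOn_Icc hpos
  simp [Real.volume_Icc_pi, Finset.prod_eq_zero_iff, hab]

section AdvectionDiffusion

variable {ℓ : Fin n → ℝ} {v : (Fin n → ℝ) → (Fin n → ℝ)} {Pe : ℝ} {f g : (Fin n → ℝ) → ℝ}

/-- The advection–diffusion flux `Pe v f - ∇f`. -/
noncomputable def advDiffFlux (Pe : ℝ) (v : (Fin n → ℝ) → (Fin n → ℝ)) (f : (Fin n → ℝ) → ℝ) :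
    (Fin n → ℝ) → (Fin n → ℝ) :=
  fun x i => Pe * v x i * f x - vgrad f x i

/-- The steady advection–diffusion operator `L f = div (Pe v f - ∇f)`. -/
noncomputable def advDiff (Pe : ℝ) (v : (Fin n → ℝ) → (Fin n → ℝ)) (f : (Fin n → ℝ) → ℝ) :
    (Fin n → ℝ) → ℝ :=
  vdiv (advDiffFlux Pe v f)

/-- The formal adjoint `L† g = -Pe v ⬝ ∇g - Δg` of `advDiff`. -/
noncomputable def advDiffAdjoint (Pe : ℝ) (v : (Fin n → ℝ) → (Fin n → ℝ)) (g : (Fin n → ℝ) → ℝ) :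
    (Fin n → ℝ) → ℝ :=
  fun x => -Pe * (v x ⬝ᵥ vgrad g x) - vdiv (vgrad g) x

/-- The bilinear concomitant of `f` and `g`: the field `g (Pe v f - ∇f) + f ∇g`, whose divergence
is the defect `g L f - f L† g` in Lagrange's identity. -/
noncomputable def bilinearConcomitant (Pe : ℝ) (v : (Fin n → ℝ) → (Fin n → ℝ))
    (f g : (Fin n → ℝ) → ℝ) : (Fin n → ℝ) → (Fin n → ℝ) :=
  fun x => g x • advDiffFlux Pe v f x + f x • vgrad g x

lemma contDiff_advDiffFlux (hv : ContDiff ℝ 1 v) (hf : ContDiff ℝ 2 f) :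
    ContDiff ℝ 1 (advDiffFlux Pe v f) :=
  contDiff_pi.2 fun i => ((contDiff_const.mul (contDiff_pi.1 hv i)).mul
    (hf.of_le one_le_two)).sub (contDiff_pi.1 (contDiff_vgrad hf one_add_one_eq_two.le) i)

lemma continuous_advDiff (hv : ContDiff ℝ 1 v) (hf : ContDiff ℝ 2 f) :
    Continuous (advDiff Pe v f) :=
  continuous_vdiv (contDiff_advDiffFlux hv hf)

lemma continuous_advDiffAdjoint (hv : Continuous v) (hg : ContDiff ℝ 2 g) :
    Continuous (advDiffAdjoint Pe v g) := by
  have hgrad : ContDiff ℝ 1 (vgrad g) := contDiff_vgrad hg one_add_one_eq_two.le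
  exact (continuous_const.mul (hv.dotProduct hgrad.continuous)).sub (continuous_vdiv hgrad)

lemma contDiff_bilinearConcomitant (hv : ContDiff ℝ 1 v) (hf : ContDiff ℝ 2 f)
    (hg : ContDiff ℝ 2 g) : ContDiff ℝ 1 (bilinearConcomitant Pe v f g) :=
  ((hg.of_le one_le_two).smul (contDiff_advDiffFlux hv hf)).add
    ((hf.of_le one_le_two).smul (contDiff_vgrad hg one_add_one_eq_two.le))

lemma isCellPeriodic_advDiffFlux (hv : IsCellPeriodic ℓ v) (hf : IsCellPeriodic ℓ f) :
    IsCellPeriodic ℓ (advDiffFlux Pe v f) := fun i x => by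
  unfold advDiffFlux
  rw [hv i x, hf i x, isCellPeriodic_vgrad hf i x]

lemma isCellPeriodic_bilinearConcomitant (hv : IsCellPeriodic ℓ v) (hf : IsCellPeriodic ℓ f)
    (hg : IsCellPeriodic ℓ g) : IsCellPeriodic ℓ (bilinearConcomitant Pe v f g) := fun i x => by
  simp only [bilinearConcomitant, isCellPeriodic_advDiffFlux hv hf i x, hf i x, hg i x,
    isCellPeriodic_vgrad hg i x]

lemma vgrad_dotProduct_advDiffFlux (x : Fin n → ℝ) :
    vgrad g x ⬝ᵥ advDiffFlux Pe v f x =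
      Pe * f x * (v x ⬝ᵥ vgrad g x) - vgrad f x ⬝ᵥ vgrad g x := by
  simp only [dotProduct, advDiffFlux, Finset.mul_sum, ← Finset.sum_sub_distrib]
  exact Finset.sum_congr rfl fun i _ => by ring

lemma vdiv_bilinearConcomitant (hv : ContDiff ℝ 1 v) (hf : ContDiff ℝ 2 f) (hg : ContDiff ℝ 2 g)
    (x : Fin n → ℝ) :
    vdiv (bilinearConcomitant Pe v f g) x =
      g x * advDiff Pe v f x - f x * advDiffAdjoint Pe v g x := by
  have hf' : DifferentiableAt ℝ f x := hf.differentiable two_ne_zero x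
  have hg' : DifferentiableAt ℝ g x := hg.differentiable two_ne_zero x
  have hflux : DifferentiableAt ℝ (advDiffFlux Pe v f) x :=
    (contDiff_advDiffFlux hv hf).differentiable one_ne_zero x
  have hgrad : DifferentiableAt ℝ (vgrad g) x :=
    (contDiff_vgrad hg one_add_one_eq_two.le).differentiable one_ne_zero x
  calc vdiv (bilinearConcomitant Pe v f g) x
    _ = g x * advDiff Pe v f x + vgrad g x ⬝ᵥ advDiffFlux Pe v f x +
          (f x * vdiv (vgrad g) x + vgrad f x ⬝ᵥ vgrad g x) := by
      unfold bilinearConcomitant advDiff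
      rw [vdiv_add (hg'.fun_smul hflux) (hf'.fun_smul hgrad), vdiv_smul hg' hflux,
        vdiv_smul hf' hgrad]
    _ = g x * advDiff Pe v f x - f x * advDiffAdjoint Pe v g x := by
      rw [vgrad_dotProduct_advDiffFlux, advDiffAdjoint]
      ring

theorem integral_mul_advDiff_eq_integral_mul_advDiffAdjoint
    (hv : ContDiff ℝ 1 v) (hf : ContDiff ℝ 2 f) (hg : ContDiff ℝ 2 g)
    (hvper : IsCellPeriodic ℓ v) (hfper : IsCellPeriodic ℓ f) (hgper : IsCellPeriodic ℓ g)
    (a : Fin n → ℝ) :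
    ∫ x in Icc a (a + ℓ), g x * advDiff Pe v f x =
      ∫ x in Icc a (a + ℓ), f x * advDiffAdjoint Pe v g x := by
  have hleft : Continuous fun x => g x * advDiff Pe v f x :=
    hg.continuous.mul (continuous_advDiff hv hf)
  have hright : Continuous fun x => f x * advDiffAdjoint Pe v g x :=
    hf.continuous.mul (continuous_advDiffAdjoint hv.continuous hg)
  rw [← sub_eq_zero, ← integral_sub hleft.integrableOn_Icc hright.integrableOn_Icc]
  simp only [← vdiv_bilinearConcomitant hv hf hg]
  exact integral_vdiv_eq_zero (contDiff_bilinearConcomitant hv hf hg)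
    (isCellPeriodic_bilinearConcomitant hvper hfper hgper) a

theorem direct_adjoint_eigenvalues_equal_general
    (hv : ContDiff ℝ 1 v) (hf : ContDiff ℝ 2 f) (hg : ContDiff ℝ 2 g)
    (hvper : IsCellPeriodic ℓ v) (hfper : IsCellPeriodic ℓ f) (hgper : IsCellPeriodic ℓ g)
    {a : Fin n → ℝ} (hfg : ∫ x in Icc a (a + ℓ), f x * g x ≠ 0) {lam lamd : ℝ}
    (hdirect : ∀ x, advDiff Pe v f x = lam * f x)
    (hadj : ∀ x, advDiffAdjoint Pe v g x = lamd * g x) :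
    lam = lamd := by
  refine mul_right_cancel₀ hfg ?_
  calc lam * ∫ x in Icc a (a + ℓ), f x * g x
    _ = ∫ x in Icc a (a + ℓ), g x * advDiff Pe v f x := by
      simp only [← integral_const_mul, hdirect, mul_comm, mul_left_comm]
    _ = ∫ x in Icc a (a + ℓ), f x * advDiffAdjoint Pe v g x :=
      integral_mul_advDiff_eq_integral_mul_advDiffAdjoint hv hf hg hvper hfper hgper a
    _ = lamd * ∫ x in Icc a (a + ℓ), f x * g x := by
      simp only [← integral_const_mul, hadj, mul_left_comm]

end AdvectionDiffusion

/-- The eigenvalue of the direct advection–diffusion eigenproblem equals the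
eigenvalue of the adjoint eigenproblem associated with positive periodic
eigenfunctions: `λ = λ†`. -/
theorem direct_adjoint_eigenvalues_equal {n : ℕ}
    (v : (Fin n → ℝ) → (Fin n → ℝ)) (hv : ContDiff ℝ 1 v)
    (hvper : ∀ (x : Fin n → ℝ) (z : Fin n → ℤ), v (x + fun i => (z i : ℝ)) = v x)
    (hdivv : ∀ x, vdiv v x = 0)
    (Pe : ℝ) (φ φd : (Fin n → ℝ) → ℝ)
    (hφ : ContDiff ℝ 2 φ) (hφd : ContDiff ℝ 2 φd)
    (hφper : ∀ (x : Fin n → ℝ) (z : Fin n → ℤ), φ (x + fun i => (z i : ℝ)) = φ x)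
    (hφdper : ∀ (x : Fin n → ℝ) (z : Fin n → ℤ), φd (x + fun i => (z i : ℝ)) = φd x)
    (hφpos : ∀ x, 0 < φ x) (hφdpos : ∀ x, 0 < φd x)
    (lam lamd : ℝ)
    (hdirect : ∀ x, vdiv (fun y i => Pe * v y i * φ y - vgrad φ y i) x = lam * φ x)
    (hadj : ∀ x,
      -Pe * (∑ i, v x i * vgrad φd x i) - vdiv (vgrad φd) x = lamd * φd x) :
    lam = lamd := by
  have hmass : 0 < ∫ x in Icc (0 : Fin n → ℝ) (0 + 1), φ x * φd x :=
    setIntegral_Icc_pos (by simp) (hφ.continuous.mul hφd.continuous).continuousOn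
      fun x _ => mul_pos (hφpos x) (hφdpos x)
  exact direct_adjoint_eigenvalues_equal_general hv hφ hφd
    (isCellPeriodic_one_of_forall_int hvper) (isCellPeriodic_one_of_forall_int hφper)
    (isCellPeriodic_one_of_forall_int hφdper) hmass.ne' hdirect hadj
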